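/- Let H be a commutative connected graded k-Hopf algebra with Bernstein homomorphism β_H : H → H ⊗ QSym, β_H(h) = Σ_α ξ_α(h) ⊗ M_α where ξ_α = m^{(k−1)} ∘ π_α ∘ Δ^{(k−1)} for α = (a₁,…,a_k). Then the antipode of H satisfies S_H = (id_H ⊗ (ε_P ∘ S_QSym)) ∘ β_H, where S_QSym is the antipode of QSym and ε_P : QSym → k is f ↦ f(1,0,0,…). -/

import Mathlib

open TensorProduct

/-- A composition: a finite list of positive integers. -/
def IsComposition (α : List ℕ) : Prop := ∀ a ∈ α, 0 < a

section

variable {k H : Type*} [CommRing k] [Ring H] [HopfAlgebra k H]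

/-- For a `k`-algebra homomorphism `ζ : H → k` and graded projections `π n : H → H`, and a
composition `α = (a₁, …, a_m)`, the map `ζ_α : H → k` : the composite of the iterated
comultiplication `Δ^{(m-1)} : H → H^{⊗m}`, the projection `π_α = π_{a₁} ⊗ ⋯ ⊗ π_{a_m}`,
`ζ^{⊗m}`, and the canonical isomorphism `k^{⊗m} ≅ k` (written in its standard recursive
form). -/
noncomputable def zetaA (ζ : H →ₐ[k] k) (π : ℕ → H →ₗ[k] H) : List ℕ → (H →ₗ[k] k)
  | [] => Coalgebra.counit (R := k)
  | a :: t => LinearMap.mul' k k ∘ₗ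
      TensorProduct.map (ζ.toLinearMap ∘ₗ π a) (zetaA ζ π t) ∘ₗ Coalgebra.comul (R := k)

/-- Convolution product on `Hom_k(H, k)`: `f ⋆ g = m_k ∘ (f ⊗ g) ∘ Δ_H`. -/
noncomputable def convK (f g : H →ₗ[k] k) : H →ₗ[k] k :=
  LinearMap.mul' k k ∘ₗ TensorProduct.map f g ∘ₗ Coalgebra.comul (R := k)

/-- For graded projections `π n : H → H` and a composition `α = (a₁, …, a_m)`, the map
`ξ_α = m^{(m-1)} ∘ π_α ∘ Δ^{(m-1)} : H → H` (written in its standard recursive form). -/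
noncomputable def xiA (π : ℕ → H →ₗ[k] H) : List ℕ → (H →ₗ[k] H)
  | [] => Algebra.linearMap k H ∘ₗ Coalgebra.counit (R := k)
  | a :: t => LinearMap.mul' k H ∘ₗ
      TensorProduct.map (π a) (xiA π t) ∘ₗ Coalgebra.comul (R := k)

/-- Convolution product on `End_k(H)`: `f ⋆ g = m_H ∘ (f ⊗ g) ∘ Δ_H`. -/
noncomputable def convH (f g : H →ₗ[k] H) : H →ₗ[k] H :=
  LinearMap.mul' k H ∘ₗ TensorProduct.map f g ∘ₗ Coalgebra.comul (R := k)

end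

open TensorProduct

/-- The underlying `k`-module of the quasisymmetric functions: the free `k`-module with basis
indexed by finite lists of natural numbers (the monomial quasisymmetric functions `M_α` for
compositions `α`, i.e. lists with positive entries, form the monomial basis). -/
abbrev QSymM (k : Type*) [CommRing k] : Type _ := List ℕ →₀ k


/-- The monomial quasisymmetric function `M_α`, as a basis vector. -/
noncomputable def Mq (k : Type*) [CommRing k] (α : List ℕ) : QSymM k := Finsupp.single α 1

/-- The comultiplication of `QSym` (deconcatenation coproduct):
`Δ (M_β) = ∑ i, M_{(b₁,…,b_i)} ⊗ M_{(b_{i+1},…,b_ℓ)}`. -/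
noncomputable def comulQ (k : Type*) [CommRing k] : QSymM k →ₗ[k] QSymM k ⊗[k] QSymM k :=
  Finsupp.lsum k fun β => LinearMap.toSpanSingleton k _
    (∑ i ∈ Finset.range (β.length + 1), Mq k (β.take i) ⊗ₜ[k] Mq k (β.drop i))

/-- The counit of `QSym`: `ε (M_α) = 1` if `α = ()` and `0` otherwise. -/
noncomputable def counitQ (k : Type*) [CommRing k] : QSymM k →ₗ[k] k :=
  Finsupp.lsum k fun β => if β = [] then LinearMap.id else 0

/-- The algebra homomorphism `ε_P : QSym → k`, `f ↦ f (1, 0, 0, …)`: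
it sends `M_α ↦ 1` if `α` has length `≤ 1`, and `M_α ↦ 0` otherwise. -/
noncomputable def epsP (k : Type*) [CommRing k] : QSymM k →ₗ[k] k :=
  Finsupp.lsum k fun β => if β.length ≤ 1 then LinearMap.id else 0

/-- The projection of `QSym` onto its homogeneous component of degree `n`. -/
noncomputable def piQ (k : Type*) [CommRing k] (n : ℕ) : QSymM k →ₗ[k] QSymM k :=
  Finsupp.lsum k fun β => if β.sum = n then LinearMap.toSpanSingleton k _ (Mq k β) else 0

section QSymProduct

variable (k : Type*) [CommRing k]

/-- Prepending an entry to the indexing composition, linearly extended. -/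
noncomputable def mapConsQ (z : ℕ) : QSymM k →ₗ[k] QSymM k :=
  Finsupp.lmapDomain k k (fun l => z :: l)

/-- The quasi-shuffle (overlapping shuffle) product of two monomial quasisymmetric functions,
defined by the usual recursion; this is the product of `QSym` on the monomial basis. -/
noncomputable def qshuffle : List ℕ → List ℕ → QSymM k
  | [], b => Finsupp.single b 1
  | a :: as, [] => Finsupp.single (a :: as) 1
  | x :: xs, y :: ys =>
      mapConsQ k x (qshuffle xs (y :: ys)) + mapConsQ k y (qshuffle (x :: xs) ys) +
        mapConsQ k (x + y) (qshuffle xs ys)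
  termination_by a b => a.length + b.length

/-- The multiplication of `QSym`, as a linear map on the tensor square. -/
noncomputable def mulQ : QSymM k ⊗[k] QSymM k →ₗ[k] QSymM k :=
  TensorProduct.lift
    (Finsupp.lsum k fun α => LinearMap.toSpanSingleton k (QSymM k →ₗ[k] QSymM k)
      (Finsupp.lsum k fun β => LinearMap.toSpanSingleton k (QSymM k) (qshuffle k α β)))

/-- The unit of `QSym`. -/
noncomputable def unitQ : k →ₗ[k] QSymM k :=
  LinearMap.toSpanSingleton k (QSymM k) (Mq k [])

end QSymProduct

/-! Write `⋆` for convolution. In a connected graded Hopf algebra `id = ηε + ∑ a > 0, π_a`, so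
`id ⋆ S = ηε` becomes the recursion `S = ηε - ∑ a > 0, π_a ⋆ S`. In degree `n` the summand
`π_a ⋆ S` only involves `S` in degree `n - a`, and unfolding the recursion gives Takeuchi's formula
`S = ∑ α, (-1) ^ ℓ(α) ξ_α` over all compositions. On the other side `ε_P` is multiplicative, so
`ε_P ∘ S_QSym` is the convolution inverse of `ε_P` in the dual of `QSym`; there
`(ε_P ⋆ g) (M_(a, t)) = g (M_(a, t)) + g (M_t)`, which forces
`ε_P (S_QSym M_α) = (-1) ^ ℓ(α)`. -/

section QSymDual

variable {k : Type*} [CommRing k]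

theorem linearMap_ext_Mq {M : Type*} [AddCommMonoid M] [Module k M] {f g : QSymM k →ₗ[k] M}
    (h : ∀ α, f (Mq k α) = g (Mq k α)) : f = g :=
  Finsupp.lhom_ext' fun α => LinearMap.ext_ring (h α)

theorem epsP_Mq (α : List ℕ) : epsP k (Mq k α) = if α.length ≤ 1 then 1 else 0 := by
  rw [epsP, Mq, Finsupp.lsum_single]
  split_ifs <;> rfl

theorem counitQ_Mq (α : List ℕ) : counitQ k (Mq k α) = if α = [] then 1 else 0 := by
  rw [counitQ, Mq, Finsupp.lsum_single]
  split_ifs <;> rfl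

theorem mapConsQ_Mq (a : ℕ) (α : List ℕ) : mapConsQ k a (Mq k α) = Mq k (a :: α) := by
  rw [mapConsQ, Mq, Finsupp.lmapDomain_apply, Finsupp.mapDomain_single, Mq]

theorem mulQ_Mq_tmul_Mq (α β : List ℕ) : mulQ k (Mq k α ⊗ₜ Mq k β) = qshuffle k α β := by
  simp [mulQ, Mq]

theorem epsP_comp_mapConsQ (a : ℕ) : epsP k ∘ₗ mapConsQ k a = counitQ k :=
  linearMap_ext_Mq fun α => by simp [mapConsQ_Mq, epsP_Mq, counitQ_Mq]

theorem counitQ_comp_mapConsQ (a : ℕ) : counitQ k ∘ₗ mapConsQ k a = 0 :=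
  linearMap_ext_Mq fun α => by simp [mapConsQ_Mq, counitQ_Mq]

theorem qshuffle_nil_left (β : List ℕ) : qshuffle k [] β = Mq k β := by
  simp [qshuffle, Mq]

theorem qshuffle_nil_right (α : List ℕ) : qshuffle k α [] = Mq k α := by
  cases α <;> simp [qshuffle, Mq]

theorem counitQ_qshuffle (α β : List ℕ) :
    counitQ k (qshuffle k α β) = if α = [] ∧ β = [] then 1 else 0 := by
  have counitQ_mapConsQ (a : ℕ) (q : QSymM k) : counitQ k (mapConsQ k a q) = 0 :=
    LinearMap.congr_fun (counitQ_comp_mapConsQ a) q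
  match α, β with
  | [], β => simp [qshuffle_nil_left, counitQ_Mq]
  | a :: α, [] => simp [qshuffle_nil_right, counitQ_Mq]
  | a :: α, b :: β => simp [qshuffle, counitQ_mapConsQ]

theorem epsP_qshuffle (α β : List ℕ) :
    epsP k (qshuffle k α β) = epsP k (Mq k α) * epsP k (Mq k β) := by
  have epsP_mapConsQ (a : ℕ) (q : QSymM k) : epsP k (mapConsQ k a q) = counitQ k q :=
    LinearMap.congr_fun (epsP_comp_mapConsQ a) q
  match α, β with
  | [], β => simp [qshuffle_nil_left, epsP_Mq]
  | a :: α, [] => simp [qshuffle_nil_right, epsP_Mq]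
  | a :: α, b :: β =>
    simp [qshuffle, epsP_Mq, epsP_mapConsQ, counitQ_qshuffle, ← ite_and, and_comm]

theorem epsP_comp_mulQ :
    epsP k ∘ₗ mulQ k = LinearMap.mul' k k ∘ₗ TensorProduct.map (epsP k) (epsP k) :=
  TensorProduct.ext <| linearMap_ext_Mq fun α => linearMap_ext_Mq fun β => by
    simp [mulQ_Mq_tmul_Mq, epsP_qshuffle]

/-- The convolution product on the linear dual of `QSym`, defined directly from `comulQ` because
`QSymM` carries no `Coalgebra` instance. -/
noncomputable def convQ (f g : QSymM k →ₗ[k] k) : QSymM k →ₗ[k] k :=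
  LinearMap.mul' k k ∘ₗ TensorProduct.map f g ∘ₗ comulQ k

theorem convQ_Mq (f g : QSymM k →ₗ[k] k) (α : List ℕ) :
    convQ f g (Mq k α) =
      ∑ i ∈ Finset.range (α.length + 1), f (Mq k (α.take i)) * g (Mq k (α.drop i)) := by
  rw [convQ, LinearMap.comp_apply, LinearMap.comp_apply, comulQ, Mq, Finsupp.lsum_single]
  simp

theorem convQ_Mq_nil (f g : QSymM k →ₗ[k] k) :
    convQ f g (Mq k []) = f (Mq k []) * g (Mq k []) := by
  simp [convQ_Mq]

theorem convQ_Mq_cons (f g : QSymM k →ₗ[k] k) (a : ℕ) (α : List ℕ) :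
    convQ f g (Mq k (a :: α)) =
      f (Mq k []) * g (Mq k (a :: α)) + convQ (f ∘ₗ mapConsQ k a) g (Mq k α) := by
  rw [convQ_Mq, convQ_Mq, List.length_cons, Finset.sum_range_succ', add_comm]
  simp [mapConsQ_Mq]

theorem counitQ_convQ (g : QSymM k →ₗ[k] k) : convQ (counitQ k) g = g := by
  refine linearMap_ext_Mq fun α => ?_
  cases α with
  | nil => simp [convQ_Mq_nil, counitQ_Mq]
  | cons a α =>
    rw [convQ_Mq_cons, counitQ_comp_mapConsQ]
    simp [convQ, counitQ_Mq]

theorem epsP_convQ_Mq_cons (g : QSymM k →ₗ[k] k) (a : ℕ) (α : List ℕ) :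
    convQ (epsP k) g (Mq k (a :: α)) = g (Mq k (a :: α)) + g (Mq k α) := by
  simp [convQ_Mq_cons, epsP_comp_mapConsQ, counitQ_convQ, epsP_Mq]

theorem epsP_convQ_epsP_comp {SQ : QSymM k →ₗ[k] QSymM k}
    (hSQ : mulQ k ∘ₗ TensorProduct.map LinearMap.id SQ ∘ₗ comulQ k = unitQ k ∘ₗ counitQ k) :
    convQ (epsP k) (epsP k ∘ₗ SQ) = counitQ k := by
  have hmap : TensorProduct.map (epsP k) (epsP k ∘ₗ SQ) =
      TensorProduct.map (epsP k) (epsP k) ∘ₗ TensorProduct.map LinearMap.id SQ := by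
    rw [← TensorProduct.map_comp, LinearMap.comp_id]
  calc convQ (epsP k) (epsP k ∘ₗ SQ)
      = (LinearMap.mul' k k ∘ₗ TensorProduct.map (epsP k) (epsP k)) ∘ₗ
          TensorProduct.map LinearMap.id SQ ∘ₗ comulQ k := by
        simp only [convQ, hmap, LinearMap.comp_assoc]
    _ = epsP k ∘ₗ unitQ k ∘ₗ counitQ k := by
        rw [← epsP_comp_mulQ, LinearMap.comp_assoc, hSQ]
    _ = counitQ k := linearMap_ext_Mq fun α => by
        simp [unitQ, epsP_Mq]

theorem eq_neg_one_pow_of_epsP_convQ {g : QSymM k →ₗ[k] k}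
    (hg : convQ (epsP k) g = counitQ k) (α : List ℕ) : g (Mq k α) = (-1) ^ α.length := by
  induction α with
  | nil => simpa [convQ_Mq_nil, epsP_Mq, counitQ_Mq] using LinearMap.congr_fun hg (Mq k [])
  | cons a α ih =>
    have hsum : g (Mq k (a :: α)) + g (Mq k α) = 0 := by
      rw [← epsP_convQ_Mq_cons, hg, counitQ_Mq, if_neg (List.cons_ne_nil a α)]
    rw [eq_neg_of_add_eq_zero_left hsum, ih, List.length_cons, pow_succ, mul_neg_one]

end QSymDual

section Compositions

/-- The finite set of compositions of `n`, as plain lists. -/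
def compositionLists (n : ℕ) : Finset (List ℕ) :=
  Finset.univ.image (Composition.blocks (n := n))

theorem mem_compositionLists {n : ℕ} {α : List ℕ} :
    α ∈ compositionLists n ↔ IsComposition α ∧ α.sum = n := by
  simp only [compositionLists, Finset.mem_image, Finset.mem_univ, true_and]
  constructor
  · rintro ⟨c, rfl⟩
    exact ⟨fun _ => c.blocks_pos, c.blocks_sum⟩
  · rintro ⟨hpos, hsum⟩
    exact ⟨⟨α, hpos _, hsum⟩, rfl⟩

theorem isComposition_cons {a : ℕ} {α : List ℕ} :
    IsComposition (a :: α) ↔ 0 < a ∧ IsComposition α :=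
  List.forall_mem_cons

theorem compositionLists_zero : compositionLists 0 = {[]} := by
  ext (_ | ⟨a, α⟩)
  · simp [mem_compositionLists, IsComposition]
  · simp only [mem_compositionLists, isComposition_cons, List.sum_cons, Finset.mem_singleton,
      reduceCtorEq, iff_false]
    omega

theorem sum_compositionLists {M : Type*} [AddCommMonoid M] {n : ℕ} (hn : n ≠ 0)
    (f : List ℕ → M) :
    ∑ α ∈ compositionLists n, f α =
      ∑ a ∈ Finset.Icc 1 n, ∑ α ∈ compositionLists (n - a), f (a :: α) := by
  rw [Finset.sum_sigma']
  refine (Finset.sum_bij (fun p _ => p.1 :: p.2) ?_ ?_ ?_ fun _ _ => rfl).symm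
  · rintro ⟨a, α⟩ h
    simp only [Finset.mem_sigma, Finset.mem_Icc, mem_compositionLists, isComposition_cons,
      List.sum_cons] at h ⊢
    grind
  · rintro ⟨a, α⟩ _ ⟨b, β⟩ _ h
    simpa using h
  · rintro (_ | ⟨a, α⟩) h
    · exact absurd (mem_compositionLists.1 h).2.symm hn
    · refine ⟨⟨a, α⟩, ?_, rfl⟩
      simp only [Finset.mem_sigma, Finset.mem_Icc, mem_compositionLists, isComposition_cons,
        List.sum_cons] at h ⊢
      grind

end Compositions

section GradedCoalgebra

open WithConv

variable {ι R C : Type*} [CommSemiring R] [AddCommMonoid C] [Module R C]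

/-- The comultiplication respects the family `𝒞`: it maps `𝒞 n` into the sum of the images of
`𝒞 i ⊗ 𝒞 j` over `i + j = n`. -/
def IsGradedComul [Add ι] [CoalgebraStruct R C] (𝒞 : ι → Submodule R C) : Prop :=
  ∀ n, ∀ c ∈ 𝒞 n, Coalgebra.comul (R := R) c ∈
    ⨆ (p : ι × ι) (_ : p.1 + p.2 = n), LinearMap.range (TensorProduct.mapIncl (𝒞 p.1) (𝒞 p.2))

/-- The endomorphisms `π n` act as the projections onto the members of the family `𝒞`. -/
def IsGradedProjection [DecidableEq ι] (𝒞 : ι → Submodule R C) (π : ι → C →ₗ[R] C) : Prop :=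
  ∀ n m, ∀ c ∈ 𝒞 m, π n c = if n = m then c else 0

theorem IsGradedComul.convMul_apply_congr [Add ι] [CoalgebraStruct R C] {A : Type*}
    [NonUnitalNonAssocSemiring A] [Module R A] [SMulCommClass R A A] [IsScalarTower R A A]
    {𝒞 : ι → Submodule R C} (hΔ : IsGradedComul 𝒞) {f f' g g' : WithConv (C →ₗ[R] A)}
    {n : ι} {c : C} (hc : c ∈ 𝒞 n)
    (h : ∀ i j, i + j = n → ∀ x ∈ 𝒞 i, ∀ y ∈ 𝒞 j, f x * g y = f' x * g' y) :
    (f * g) c = (f' * g') c := by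
  suffices hle : ⨆ (p : ι × ι) (_ : p.1 + p.2 = n),
      LinearMap.range (TensorProduct.mapIncl (𝒞 p.1) (𝒞 p.2)) ≤
        LinearMap.eqLocus (LinearMap.mul' R A ∘ₗ TensorProduct.map f.ofConv g.ofConv)
          (LinearMap.mul' R A ∘ₗ TensorProduct.map f'.ofConv g'.ofConv) from hle (hΔ n c hc)
  refine iSup₂_le fun p hp => LinearMap.range_le_iff_comap.2 (eq_top_iff.2 ?_)
  rw [← TensorProduct.span_tmul_eq_top, Submodule.span_le]
  rintro _ ⟨x, y, rfl⟩
  exact h p.1 p.2 hp x x.2 y y.2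

theorem IsGradedComul.counit_apply_eq_zero [AddLeftCancelMonoid ι] [DecidableEq ι]
    [Coalgebra R C] {𝒞 : ι → Submodule R C} {π : ι → C →ₗ[R] C} (hΔ : IsGradedComul 𝒞)
    (hπ : IsGradedProjection 𝒞 π) {n : ι} (hn : n ≠ 0) {c : C} (hc : c ∈ 𝒞 n) :
    Coalgebra.counit (R := R) c = 0 := by
  have hconv : (1 * toConv (Coalgebra.counit ∘ₗ π 0) : WithConv (C →ₗ[R] R)) c =
      (toConv (Coalgebra.counit ∘ₗ π n) * 1 : WithConv (C →ₗ[R] R)) c := by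
    refine hΔ.convMul_apply_congr hc fun i j hij x hx y hy => ?_
    have hiff : n = i ↔ 0 = j := by
      rw [← hij, add_eq_left, eq_comm]
    have hπx : π n x = if 0 = j then x else 0 := by
      simp only [hπ n i x hx, hiff]
    have hπy := hπ 0 j y hy
    split_ifs at hπx hπy <;> simp [hπx, hπy]
  simpa [hπ 0 n c hc, hπ n n c hc, hn.symm] using hconv.symm

theorem IsGradedComul.counit_add_sum_projection {H : Type*} [Semiring H] [Bialgebra R H]
    {ℋ : ℕ → Submodule R H} {π : ℕ → H →ₗ[R] H} (hΔ : IsGradedComul ℋ)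
    (hπ : IsGradedProjection ℋ π) (hconn : ℋ 0 = LinearMap.range (Algebra.linearMap R H))
    {i n : ℕ} (hin : i ≤ n) {x : H} (hx : x ∈ ℋ i) :
    algebraMap R H (Coalgebra.counit x) + ∑ a ∈ Finset.Icc 1 n, π a x = x := by
  simp only [hπ _ i x hx, Finset.sum_ite_eq', Finset.mem_Icc]
  obtain rfl | hi := Nat.eq_zero_or_pos i
  · obtain ⟨c, rfl⟩ := hconn ▸ hx
    simp
  · simp [hΔ.counit_apply_eq_zero hπ hi.ne' hx, hin, Nat.one_le_iff_ne_zero, hi.ne']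

theorem IsGradedComul.projection_convMul_apply_congr {H : Type*} [Semiring H] [Algebra R H]
    [CoalgebraStruct R H] [Add ι] [DecidableEq ι] {ℋ : ι → Submodule R H} {π : ι → H →ₗ[R] H}
    (hΔ : IsGradedComul ℋ) (hπ : IsGradedProjection ℋ π) {g g' : WithConv (H →ₗ[R] H)}
    {a n : ι} {h : H} (hh : h ∈ ℋ n) (hg : ∀ j, a + j = n → ∀ y ∈ ℋ j, g y = g' y) :
    (toConv (π a) * g) h = (toConv (π a) * g') h := by
  refine hΔ.convMul_apply_congr hh fun i j hij x hx y hy => ?_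
  obtain rfl | hai := eq_or_ne a i
  · rw [hg j hij y hy]
  · simp [hπ a i x hx, hai]

end GradedCoalgebra

section ConnectedGradedHopf

open WithConv

variable {k H : Type*} [CommRing k] [Ring H] [HopfAlgebra k H]
  {ℋ : ℕ → Submodule k H} {π : ℕ → H →ₗ[k] H}

theorem xiA_cons_apply (a : ℕ) (α : List ℕ) (h : H) :
    xiA π (a :: α) h = (toConv (π a) * toConv (xiA π α)) h :=
  rfl

theorem xiA_apply_eq_zero (hΔ : IsGradedComul ℋ) (hπ : IsGradedProjection ℋ π) {α : List ℕ}
    {n : ℕ} (hα : α.sum ≠ n) {h : H} (hh : h ∈ ℋ n) : xiA π α h = 0 := by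
  induction α generalizing n h with
  | nil => simp [xiA, hΔ.counit_apply_eq_zero hπ (Ne.symm hα) hh]
  | cons a α ih =>
    have hzero : (toConv (π a) * toConv (xiA π α)) h =
        (toConv (π a) * 0 : WithConv (H →ₗ[k] H)) h :=
      hΔ.projection_convMul_apply_congr hπ hh fun j hj y hy =>
        ih (by rw [List.sum_cons] at hα; omega) hy
    simpa [xiA_cons_apply] using hzero

theorem antipode_apply_eq_neg_sum (hΔ : IsGradedComul ℋ) (hπ : IsGradedProjection ℋ π)
    (hconn : ℋ 0 = LinearMap.range (Algebra.linearMap k H)) {n : ℕ} (hn : n ≠ 0) {h : H}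
    (hh : h ∈ ℋ n) :
    HopfAlgebra.antipode k h =
      -∑ a ∈ Finset.Icc 1 n,
        (toConv (π a) * toConv (HopfAlgebra.antipode k) : WithConv (H →ₗ[k] H)) h := by
  set S : WithConv (H →ₗ[k] H) := toConv (HopfAlgebra.antipode k)
  refine eq_neg_of_add_eq_zero_left ?_
  calc S h + ∑ a ∈ Finset.Icc 1 n, (toConv (π a) * S) h
      = ((1 + ∑ a ∈ Finset.Icc 1 n, toConv (π a)) * S) h := by
        simp [add_mul, Finset.sum_mul]
    _ = ((toConv LinearMap.id : WithConv (H →ₗ[k] H)) * S) h := by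
        refine hΔ.convMul_apply_congr hh fun i j hij x hx y _ => congrArg (· * S y) ?_
        simpa using hΔ.counit_add_sum_projection hπ hconn (show i ≤ n by omega) hx
    _ = 0 := by
        rw [LinearMap.id_mul_antipode]
        simp [hΔ.counit_apply_eq_zero hπ hn hh]

theorem antipode_apply_eq_sum_compositionLists (hΔ : IsGradedComul ℋ)
    (hπ : IsGradedProjection ℋ π) (hconn : ℋ 0 = LinearMap.range (Algebra.linearMap k H))
    {n : ℕ} {h : H} (hh : h ∈ ℋ n) :
    HopfAlgebra.antipode k h =
      ∑ α ∈ compositionLists n, (-1 : k) ^ α.length • xiA π α h := by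
  induction n using Nat.strong_induction_on generalizing h with
  | _ n ih =>
  obtain rfl | hn := eq_or_ne n 0
  · obtain ⟨c, rfl⟩ := hconn ▸ hh
    simp [compositionLists_zero, xiA, Algebra.algebraMap_eq_smul_one]
  have hterm (a : ℕ) (ha : a ∈ Finset.Icc 1 n) :
      (toConv (π a) * toConv (HopfAlgebra.antipode k) : WithConv (H →ₗ[k] H)) h =
        ∑ α ∈ compositionLists (n - a), (-1 : k) ^ α.length • xiA π (a :: α) h :=
    calc _ = (toConv (π a) * ∑ α ∈ compositionLists (n - a),
            (-1 : k) ^ α.length • toConv (xiA π α)) h := by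
          refine hΔ.projection_convMul_apply_congr hπ hh fun j hj y hy => ?_
          obtain rfl : n - a = j := by omega
          have hlt : n - a < n := by grind
          simp [ih (n - a) hlt hy]
      _ = _ := by
          simp [Finset.mul_sum, xiA_cons_apply]
  rw [antipode_apply_eq_neg_sum hΔ hπ hconn hn hh, sum_compositionLists hn,
    Finset.sum_congr rfl hterm]
  simp [pow_succ]

theorem finite_isComposition_xiA_ne_zero (hΔ : IsGradedComul ℋ) (hπ : IsGradedProjection ℋ π)
    {h : H} (hh : h ∈ ⨆ n, ℋ n) : {α | IsComposition α ∧ xiA π α h ≠ 0}.Finite := by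
  induction hh using Submodule.iSup_induction' with
  | mem n x hx =>
    refine (compositionLists n).finite_toSet.subset fun α hα => mem_compositionLists.2 ⟨hα.1, ?_⟩
    exact of_not_not fun hsum => hα.2 (xiA_apply_eq_zero hΔ hπ hsum hx)
  | zero => simp
  | add x y _ _ hx hy =>
    refine (hx.union hy).subset fun α ⟨hα, hxy⟩ => ?_
    rw [map_add] at hxy
    by_cases hx0 : xiA π α x = 0
    · exact Or.inr ⟨hα, fun hy0 => hxy (by rw [hx0, hy0, add_zero])⟩
    · exact Or.inl ⟨hα, hx0⟩

theorem antipode_apply_eq_finsum_isComposition (hΔ : IsGradedComul ℋ)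
    (hπ : IsGradedProjection ℋ π) (hconn : ℋ 0 = LinearMap.range (Algebra.linearMap k H))
    {h : H} (hh : h ∈ ⨆ n, ℋ n) :
    HopfAlgebra.antipode k h =
      ∑ᶠ α ∈ {α | IsComposition α}, (-1 : k) ^ α.length • xiA π α h := by
  have hfin {z : H} (hz : z ∈ ⨆ n, ℋ n) : ({α | IsComposition α} ∩
      Function.support fun α => (-1 : k) ^ α.length • xiA π α z).Finite :=
    (finite_isComposition_xiA_ne_zero hΔ hπ hz).subset fun α hα =>
      ⟨hα.1, right_ne_zero_of_smul hα.2⟩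
  induction hh using Submodule.iSup_induction' with
  | mem n x hx =>
    rw [antipode_apply_eq_sum_compositionLists hΔ hπ hconn hx]
    refine (finsum_mem_eq_sum_of_inter_support_eq _
      (Set.ext fun α => and_congr_left fun hα => ?_)).symm
    have hsum : α.sum = n := of_not_not fun hsum =>
      right_ne_zero_of_smul hα (xiA_apply_eq_zero hΔ hπ hsum hx)
    simp [mem_compositionLists, hsum]
  | zero => simp
  | add x y hx hy ihx ihy =>
    simp only [map_add, smul_add]
    rw [ihx, ihy, finsum_mem_add_distrib' (hfin hx) (hfin hy)]

end ConnectedGradedHopf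

theorem antipode_eq_bernstein_formula_general {k H : Type*} [CommRing k] [Ring H]
    [HopfAlgebra k H] {ℋ : ℕ → Submodule k H} {π : ℕ → H →ₗ[k] H}
    (hdec : DirectSum.IsInternal ℋ) (hconn : ℋ 0 = LinearMap.range (Algebra.linearMap k H))
    (hπ : IsGradedProjection ℋ π) (hΔ : IsGradedComul ℋ) {SQ : QSymM k →ₗ[k] QSymM k}
    (hSQ : mulQ k ∘ₗ TensorProduct.map LinearMap.id SQ ∘ₗ comulQ k = unitQ k ∘ₗ counitQ k)
    (h : H) :
    HopfAlgebra.antipode k h =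
      ∑ᶠ α ∈ {α | IsComposition α}, epsP k (SQ (Mq k α)) • xiA π α h := by
  have hcoeff (α : List ℕ) : epsP k (SQ (Mq k α)) = (-1) ^ α.length :=
    eq_neg_one_pow_of_epsP_convQ (epsP_convQ_epsP_comp hSQ) α
  have hh : h ∈ ⨆ n, ℋ n := hdec.submodule_iSup_eq_top ▸ Submodule.mem_top
  simpa only [hcoeff] using antipode_apply_eq_finsum_isComposition hΔ hπ hconn hh

/-- Let `H` be a commutative connected graded `k`-Hopf algebra (grading `ℋ`, graded projections
`π`), with Bernstein homomorphism `β_H : H → H ⊗ QSym`, `β_H(h) = ∑_α ξ_α(h) ⊗ M_α`, where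
`ξ_α = m^{(m-1)} ∘ π_α ∘ Δ^{(m-1)}`.  Let `S_QSym` be the antipode of `QSym` (a linear map `SQ`
satisfying the two antipode identities for the bialgebra `QSym`) and `ε_P : QSym → k`,
`f ↦ f(1,0,0,…)`.  Then the antipode of `H` satisfies
`S_H = (id_H ⊗ (ε_P ∘ S_QSym)) ∘ β_H`. -/
theorem antipode_eq_bernstein_formula {k H : Type*} [CommRing k] [CommRing H]
    [HopfAlgebra k H]
    (ℋ : ℕ → Submodule k H) (π : ℕ → H →ₗ[k] H)
    (hdec : DirectSum.IsInternal ℋ)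
    (hconn : ℋ 0 = LinearMap.range (Algebra.linearMap k H))
    (hπ : ∀ n m : ℕ, ∀ h ∈ ℋ m, π n h = if n = m then h else 0)
    (hgmul : ∀ i j : ℕ, ℋ i * ℋ j ≤ ℋ (i + j))
    (hgcomul : ∀ n : ℕ, ∀ h ∈ ℋ n, Coalgebra.comul (R := k) h ∈
      ⨆ (p : ℕ × ℕ) (_ : p.1 + p.2 = n),
        LinearMap.range (TensorProduct.mapIncl (ℋ p.1) (ℋ p.2)))
    (SQ : QSymM k →ₗ[k] QSymM k)
    (hSQ₁ : mulQ k ∘ₗ TensorProduct.map SQ LinearMap.id ∘ₗ comulQ k = unitQ k ∘ₗ counitQ k)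
    (hSQ₂ : mulQ k ∘ₗ TensorProduct.map LinearMap.id SQ ∘ₗ comulQ k = unitQ k ∘ₗ counitQ k) :
    ∀ h : H,
      HopfAlgebra.antipode (R := k) h =
        ∑ᶠ α ∈ {α : List ℕ | IsComposition α}, epsP k (SQ (Mq k α)) • xiA π α h :=
  antipode_eq_bernstein_formula_general hdec hconn hπ hgcomul hSQ₂
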